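/- Let (k : K → X, f : X → M) be a Schreier extension with K commutative, let m ∈ M, a ∈ K, and let u, v ∈ B_m be two representatives of m. If b, c ∈ K satisfy u + k(a) = k(b) + u and v + k(a) = k(c) + v, then b = c. (Hence the assignment (m, a) ↦ m ∗ a, where m ∗ a is the unique b with u + k(a) = k(b) + u for a representative u of m, is well defined, independently of the choice of representative.) -/

import Mathlib

/-- A monoid extension: `K`, `X` additive monoids (not assumed commutative),
`M` a multiplicative monoid, `k : K → X` an injective monoid homomorphism whose image
is `{x | f x = 1}`, and `f : X → M` a surjective monoid homomorphism. -/
structure MonoidExtension {K X M : Type*} [AddMonoid K] [AddMonoid X] [Monoid M]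
    (k : K → X) (f : X → M) : Prop where
  k_add : ∀ a b : K, k (a + b) = k a + k b
  k_zero : k 0 = 0
  k_inj : Function.Injective k
  ker_eq : ∀ x : X, f x = 1 ↔ x ∈ Set.range k
  f_add : ∀ x y : X, f (x + y) = f x * f y
  f_zero : f 0 = 1
  f_surj : Function.Surjective f

/-- The set `B_m` of representatives of `m`. -/
def Reps {K X M : Type*} [AddMonoid K] [AddMonoid X] [Monoid M]
    (k : K → X) (f : X → M) (m : M) : Set X :=
  {u | f u = m ∧ ∀ x : X, f x = m → ∃! a : K, x = k a + u}

/-- A monoid extension is a Schreier extension if every `m` has a representative. -/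
def IsSchreier {K X M : Type*} [AddMonoid K] [AddMonoid X] [Monoid M]
    (k : K → X) (f : X → M) : Prop :=
  ∀ m : M, (Reps k f m).Nonempty

namespace MonoidExtension

variable {X M : Type*} [AddMonoid X] [Monoid M] {f : X → M} {m : M} {u v : X}

section AddMonoid

variable {K : Type*} [AddMonoid K] {k : K → X}

theorem map_k (hE : MonoidExtension k f) (a : K) : f (k a) = 1 :=
  (hE.ker_eq _).2 ⟨a, rfl⟩

theorem addCommute_k (hE : MonoidExtension k f) {a b : K} (h : AddCommute a b) :
    AddCommute (k a) (k b) := by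
  rw [addCommute_iff_eq, ← hE.k_add, h.eq, hE.k_add]

theorem k_add_injective_of_mem_reps (hE : MonoidExtension k f) (hu : u ∈ Reps k f m) :
    Function.Injective fun a => k a + u := by
  intro b c hbc
  have hfiber : f (k c + u) = m := by rw [hE.f_add, hE.map_k, one_mul, hu.1]
  exact (hu.2 _ hfiber).unique hbc.symm rfl

end AddMonoid

theorem addSemiconjBy_of_mem_fiber {K : Type*} [AddCommMonoid K] {k : K → X}
    (hE : MonoidExtension k f) {a b : K} (hu : u ∈ Reps k f m) (hv : f v = m)
    (hb : AddSemiconjBy u (k a) (k b)) : AddSemiconjBy v (k a) (k b) := by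
  obtain ⟨g, rfl, -⟩ := hu.2 v hv
  exact AddSemiconjBy.add_left (hE.addCommute_k (AddCommute.all g b)) hb

end MonoidExtension

theorem action_well_defined_general {K X M : Type*} [AddCommMonoid K] [AddMonoid X] [Monoid M]
    {k : K → X} {f : X → M} (hE : MonoidExtension k f)
    {m : M} {a : K} {u v : X} (hu : u ∈ Reps k f m) (hv : v ∈ Reps k f m)
    {b c : K} (hb : u + k a = k b + u) (hc : v + k a = k c + v) :
    b = c := by
  have hvb : v + k a = k b + v := hE.addSemiconjBy_of_mem_fiber hu hv.1 hb
  exact hE.k_add_injective_of_mem_reps hv (hvb.symm.trans hc)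

/-- Well-definedness of the induced action (Section 3): for a Schreier extension with `K`
commutative, if `u, v ∈ B_m` and `b, c ∈ K` satisfy `u + k a = k b + u` and
`v + k a = k c + v`, then `b = c`; hence `m ∗ a` is independent of the chosen
representative. -/
theorem action_well_defined {K X M : Type*} [AddCommMonoid K] [AddMonoid X] [Monoid M]
    (k : K → X) (f : X → M) (hE : MonoidExtension k f) (hS : IsSchreier k f)
    (m : M) (a : K) (u v : X) (hu : u ∈ Reps k f m) (hv : v ∈ Reps k f m)
    (b c : K) (hb : u + k a = k b + u) (hc : v + k a = k c + v) :
    b = c :=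
  action_well_defined_general hE hu hv hb hc
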